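/- Let n ≥ 1 and k ≥ 1. For each j with 1 ≤ j ≤ 2n+1, the number of paths p in 𝒫(n,1,1) with exactly k circular peaks such that exactly j of the vertices s_0, s_1, …, s_{2n} satisfy s_i ≤ 0 equals (1/(2n+1))·(C(n,k−1)·C(n,k) + C(n+1,k)·C(n−1,k−1)); in particular this count is independent of j and equals the Narayana number N(n,k). -/

import Mathlib

open Finset

/-- The sum of the first `m` entries of a sequence `p` of length `N` (the height `s_m`). -/
def psum {N : ℕ} (p : Fin N → ℤ) (m : ℕ) : ℤ :=
  ∑ j ∈ Finset.univ.filter (fun j : Fin N => (j : ℕ) < m), p j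

namespace NCF

/-- Peaks of the word `c l e`. -/
def pk (e : Bool) : Bool → List Bool → ℕ
  | c, [] => if c = true ∧ e = false then 1 else 0
  | c, x :: l => (if c = true ∧ x = false then 1 else 0) + pk e x l

/-- Words of length `N` with `a` ups and `k` peaks in `c w e`. -/
def S (e c : Bool) (N a k : ℕ) : Finset (Fin N → Bool) :=
  univ.filter (fun q => (univ.filter (fun i => q i = true)).card = a ∧ pk e c (List.ofFn q) = k)

lemma card_split {m : ℕ} (P : (Fin (m+1) → Bool) → Prop) [DecidablePred P] :
    (univ.filter P).card =
      (univ.filter (fun q : Fin m → Bool => P (Fin.cons true q))).card +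
      (univ.filter (fun q : Fin m → Bool => P (Fin.cons false q))).card := by
  classical
  simp only [Finset.card_filter]
  rw [← (Fin.consEquiv (fun _ : Fin (m+1) => Bool)).sum_comp, Fintype.sum_prod_type,
    Fintype.sum_bool]
  rfl

lemma ups_cons {m : ℕ} (x : Bool) (q : Fin m → Bool) :
    (univ.filter (fun i => (Fin.cons x q : Fin (m+1) → Bool) i = true)).card =
      (if x = true then 1 else 0) + (univ.filter (fun i => q i = true)).card := by
  simp only [Finset.card_filter]
  rw [Fin.sum_univ_succ]
  simp

lemma pk_cons {m : ℕ} (e c x : Bool) (q : Fin m → Bool) :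
    pk e c (List.ofFn (Fin.cons x q : Fin (m+1) → Bool)) =
      (if c = true ∧ x = false then 1 else 0) + pk e x (List.ofFn q) := by
  rw [List.ofFn_succ]
  simp [pk]

lemma S_zero (e c : Bool) (a k : ℕ) :
    (S e c 0 a k).card = if a = 0 ∧ (if c = true ∧ e = false then 1 else 0) = k then 1 else 0 := by
  unfold S
  rw [Finset.card_filter]
  simp [pk, eq_comm (a := 0) (b := a)]

lemma S_gt (e c : Bool) (N a k : ℕ) (h : N < a) : (S e c N a k).card = 0 := by
  unfold S
  rw [Finset.card_eq_zero, Finset.filter_eq_empty_iff]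
  rintro q - ⟨h1, -⟩
  have := Finset.card_le_univ (univ.filter (fun i => q i = true))
  simp at this
  omega

lemma S_succ_ff (e : Bool) (N a k : ℕ) :
    (S e false (N+1) (a+1) k).card = (S e true N a k).card + (S e false N (a+1) k).card := by
  unfold S
  rw [card_split]
  have h1 : ∀ c d : ℕ, (1 + c = d + 1) ↔ c = d := by intro c d; omega
  have h0 : ∀ c : ℕ, ¬ (1 + c = 0) := by intro c; omega
  simp only [ups_cons, pk_cons]
  simp [h1, h0]

lemma S_zero_ff (e : Bool) (N k : ℕ) :
    (S e false (N+1) 0 k).card = (S e false N 0 k).card := by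
  unfold S
  rw [card_split]
  have h1 : ∀ c d : ℕ, (1 + c = d + 1) ↔ c = d := by intro c d; omega
  have h0 : ∀ c : ℕ, ¬ (1 + c = 0) := by intro c; omega
  simp only [ups_cons, pk_cons]
  simp [h1, h0]

lemma S_succ_tt (e : Bool) (N a k : ℕ) :
    (S e true (N+1) (a+1) (k+1)).card =
      (S e true N a (k+1)).card + (S e false N (a+1) k).card := by
  unfold S
  rw [card_split]
  have h1 : ∀ c d : ℕ, (1 + c = d + 1) ↔ c = d := by intro c d; omega
  have h0 : ∀ c : ℕ, ¬ (1 + c = 0) := by intro c; omega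
  simp only [ups_cons, pk_cons]
  simp [h1, h0]

lemma S_succ_tt0 (e : Bool) (N a : ℕ) :
    (S e true (N+1) (a+1) 0).card = (S e true N a 0).card := by
  unfold S
  rw [card_split]
  have h1 : ∀ c d : ℕ, (1 + c = d + 1) ↔ c = d := by intro c d; omega
  have h0 : ∀ c : ℕ, ¬ (1 + c = 0) := by intro c; omega
  simp only [ups_cons, pk_cons]
  simp [h1, h0]

lemma S_zero_tt (e : Bool) (N k : ℕ) :
    (S e true (N+1) 0 (k+1)).card = (S e false N 0 k).card := by
  unfold S
  rw [card_split]
  have h1 : ∀ c d : ℕ, (1 + c = d + 1) ↔ c = d := by intro c d; omega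
  have h0 : ∀ c : ℕ, ¬ (1 + c = 0) := by intro c; omega
  simp only [ups_cons, pk_cons]
  simp [h1, h0]

lemma S_zero_tt0 (e : Bool) (N : ℕ) :
    (S e true (N+1) 0 0).card = 0 := by
  unfold S
  rw [card_split]
  have h1 : ∀ c d : ℕ, (1 + c = d + 1) ↔ c = d := by intro c d; omega
  have h0 : ∀ c : ℕ, ¬ (1 + c = 0) := by intro c; omega
  simp only [ups_cons, pk_cons]
  simp [h1, h0]

/-- closed form, `U w` -/
def FU : ℕ → ℕ → ℕ → ℕ
  | _, 0, 0 => 1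
  | _, 0, _+1 => 0
  | _, _+1, 0 => 0
  | a, b+1, k+1 => (a+1).choose (k+1) * b.choose k

/-- closed form, `U w D` -/
def GU : ℕ → ℕ → ℕ → ℕ
  | _, _, 0 => 0
  | a, b, k+1 => a.choose k * b.choose k

/-- closed form, `D w D` -/
def GD : ℕ → ℕ → ℕ → ℕ
  | 0, _, 0 => 1
  | 0, _, _+1 => 0
  | _+1, _, 0 => 0
  | a+1, b, k+1 => a.choose k * (b+1).choose (k+1)

lemma F_formula (N : ℕ) : ∀ a b k, a + b = N →
    (S true true N a k).card = FU a b k ∧ (S true false N a k).card = a.choose k * b.choose k := by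
  induction N with
  | zero =>
    intro a b k h
    obtain ⟨rfl, rfl⟩ : a = 0 ∧ b = 0 := by omega
    rw [S_zero, S_zero]
    cases k <;> simp [FU]
  | succ N ih =>
    intro a b k h
    rcases a with _ | a
    · obtain rfl : b = N + 1 := by omega
      rcases k with _ | k
      · rw [S_zero_tt0, S_zero_ff, (ih 0 N 0 (by omega)).2]
        simp [FU]
      · rw [S_zero_tt, S_zero_ff, (ih 0 N _ (by omega)).2, (ih 0 N _ (by omega)).2]
        rcases k with _ | k <;> simp [FU, Nat.choose_eq_zero_of_lt]
    · rcases b with _ | b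
      · obtain rfl : a = N := by omega
        rcases k with _ | k
        · rw [S_succ_tt0, S_succ_ff, (ih a 0 0 (by omega)).1, S_gt _ _ _ _ _ (by omega)]
          simp [FU]
        · rw [S_succ_tt, S_succ_ff, (ih a 0 _ (by omega)).1, S_gt _ _ _ _ _ (by omega),
            S_gt _ _ _ _ _ (by omega)]
          simp [FU]
      · rcases k with _ | k
        · rw [S_succ_tt0, S_succ_ff, (ih a (b+1) 0 (by omega)).1, (ih (a+1) b 0 (by omega)).2]
          simp [FU]
        · rw [S_succ_tt, S_succ_ff, (ih a (b+1) _ (by omega)).1, (ih (a+1) b _ (by omega)).2,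
            (ih (a+1) b _ (by omega)).2]
          simp only [FU]
          rw [Nat.choose_succ_succ (a+1) k, Nat.choose_succ_succ b k]
          constructor <;> ring

lemma G_formula (N : ℕ) : ∀ a b k, a + b = N →
    (S false true N a k).card = GU a b k ∧ (S false false N a k).card = GD a b k := by
  induction N with
  | zero =>
    intro a b k h
    obtain ⟨rfl, rfl⟩ : a = 0 ∧ b = 0 := by omega
    rw [S_zero, S_zero]
    rcases k with _ | _ | k <;> simp [GU, GD]
  | succ N ih =>
    intro a b k h
    rcases a with _ | a
    · obtain rfl : b = N + 1 := by omega
      rcases k with _ | k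
      · rw [S_zero_tt0, S_zero_ff, (ih 0 N 0 (by omega)).2]
        simp [GU, GD]
      · rw [S_zero_tt, S_zero_ff, (ih 0 N _ (by omega)).2, (ih 0 N _ (by omega)).2]
        cases k <;> simp [GU, GD]
    · rcases b with _ | b
      · obtain rfl : a = N := by omega
        rcases k with _ | k
        · rw [S_succ_tt0, S_succ_ff, (ih a 0 0 (by omega)).1, S_gt _ _ _ _ _ (by omega)]
          simp [GU, GD]
        · rw [S_succ_tt, S_succ_ff, (ih a 0 _ (by omega)).1, S_gt _ _ _ _ _ (by omega),
            S_gt _ _ _ _ _ (by omega)]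
          rcases k with _ | k <;> simp [GU, GD, Nat.choose_eq_zero_of_lt]
      · rcases k with _ | k
        · rw [S_succ_tt0, S_succ_ff, (ih a (b+1) 0 (by omega)).1, (ih (a+1) b 0 (by omega)).2]
          simp [GU, GD]
        · rw [S_succ_tt, S_succ_ff, (ih a (b+1) _ (by omega)).1, (ih (a+1) b _ (by omega)).2,
            (ih (a+1) b _ (by omega)).2]
          rcases k with _ | k
          · simp [GU, GD]; ring
          · simp only [GU, GD]
            rw [Nat.choose_succ_succ a k, Nat.choose_succ_succ (b+1) (k+1)]
            constructor <;> ring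

/-- linear peaks -/
def lpk {m : ℕ} (q : Fin (m+1) → Bool) : ℕ :=
  (univ.filter (fun i : Fin m => q i.castSucc = true ∧ q i.succ = false)).card

lemma lpk_pk (e : Bool) (m : ℕ) : ∀ (x : Bool) (q : Fin m → Bool),
    lpk (Fin.cons x q : Fin (m+1) → Bool) +
      (if (Fin.cons x q : Fin (m+1) → Bool) (Fin.last m) = true ∧ e = false then 1 else 0)
      = pk e x (List.ofFn q) := by
  induction m with
  | zero =>
    intro x q
    simp [lpk, pk, Fin.last]
  | succ m ih =>
    intro x q
    induction q using Fin.consCases with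
    | _ y q =>
    rw [pk_cons, ← ih y q]
    unfold lpk
    simp only [Finset.card_filter]
    rw [Fin.sum_univ_succ]
    rw [← Fin.succ_last]
    simp only [Fin.castSucc_zero, Fin.cons_zero, Fin.cons_succ, ← Fin.succ_castSucc]
    ring

/-- circular peaks -/
def cpk {m : ℕ} (q : Fin (m+1) → Bool) : ℕ :=
  (univ.filter (fun i => q i = true ∧ q (i+1) = false)).card

lemma cpk_eq {m : ℕ} (q : Fin (m+1) → Bool) :
    cpk q = lpk q + (if q 0 = false ∧ q (Fin.last m) = true then 1 else 0) := by
  unfold cpk lpk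
  simp only [Finset.card_filter]
  rw [Fin.sum_univ_castSucc]
  simp [Fin.coeSucc_eq_succ, and_comm]

lemma cpk_cons {m : ℕ} (x : Bool) (q : Fin m → Bool) :
    cpk (Fin.cons x q : Fin (m+1) → Bool) = pk x x (List.ofFn q) := by
  rw [cpk_eq, ← lpk_pk]
  simp [and_comm]

/-- All paths with `a` ups and `k` circular peaks. -/
def T (m a k : ℕ) : Finset (Fin (m+1) → Bool) :=
  univ.filter (fun q => (univ.filter (fun i => q i = true)).card = a ∧ cpk q = k)

lemma card_T (n k : ℕ) (hn : 1 ≤ n) (hk : 1 ≤ k) :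
    (T (2*n) (n+1) k).card =
      Nat.choose n (k-1) * Nat.choose n k + Nat.choose (n+1) k * Nat.choose (n-1) (k-1) := by
  obtain ⟨n, rfl⟩ := Nat.exists_eq_add_of_le' hn
  obtain ⟨k, rfl⟩ := Nat.exists_eq_add_of_le' hk
  unfold T
  rw [card_split]
  have h1 := (F_formula (2*(n+1)) (n+1) (n+1) (k+1) (by omega)).1
  have h2 := (G_formula (2*(n+1)) (n+1+1) n (k+1) (by omega)).2
  unfold S at h1 h2
  simp only [ups_cons, cpk_cons]
  simp only [FU, GD] at h1 h2
  have h3 : ∀ c : ℕ, (1 + c = n + 1 + 1) ↔ c = n + 1 := by intro c; omega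
  simp only [if_true, h3, Bool.false_eq_true, if_false, zero_add]
  rw [h1, h2]
  simp only [Nat.add_sub_cancel]
  ring

/-- step values -/
def val {N : ℕ} (q : Fin N → Bool) : Fin N → ℤ := fun i => if q i = true then 1 else -1

/-- number of vertices on or below the axis -/
def J {N : ℕ} (q : Fin N → Bool) : ℕ :=
  ((Finset.range N).filter (fun m => psum (val q) m ≤ 0)).card

/-- rotation -/
def rot {m : ℕ} (r : Fin (m+1)) (q : Fin (m+1) → Bool) : Fin (m+1) → Bool := fun i => q (r + i)

/-- extended height -/
def E {m : ℕ} (q : Fin (m+1) → Bool) (t : ℕ) : ℤ :=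
  ∑ i ∈ range t, val q (Fin.ofNat (m+1) i)

lemma psum_eq {m : ℕ} (p : Fin (m+1) → ℤ) (t : ℕ) (ht : t ≤ m+1) :
    psum p t = ∑ i ∈ range t, p (Fin.ofNat (m+1) i) := by
  unfold psum
  refine Finset.sum_bij' (fun j _ => (j : ℕ)) (fun i _ => Fin.ofNat (m+1) i) ?_ ?_ ?_ ?_ ?_
  · intro j hj; simpa using hj
  · intro i hi
    simp only [mem_range] at hi
    simp [Fin.ofNat, Nat.mod_eq_of_lt (show i < m+1 by omega), hi]
  · intro j hj; simp
  · intro i hi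
    simp only [mem_range] at hi
    simp [Fin.ofNat, Nat.mod_eq_of_lt (show i < m+1 by omega)]
  · intro j hj; simp

lemma psum_rot {m : ℕ} (r : Fin (m+1)) (q : Fin (m+1) → Bool) (t : ℕ) (ht : t ≤ m+1) :
    psum (val (rot r q)) t = E q (r + t) - E q r := by
  rw [psum_eq _ _ ht]
  unfold E
  rw [Finset.sum_range_add, add_sub_cancel_left]
  refine Finset.sum_congr rfl fun i _ => ?_
  unfold val rot
  have : r + Fin.ofNat (m+1) i = Fin.ofNat (m+1) (r + i) := by
    ext; simp [Fin.ofNat, Fin.val_add]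
  rw [this]

lemma E_total {n : ℕ} (q : Fin (2*n+1) → Bool)
    (h : (univ.filter (fun i => q i = true)).card = n+1) : E q (2*n+1) = 1 := by
  unfold E
  rw [Finset.sum_range]
  have : ∀ i : Fin (2*n+1), val q (Fin.ofNat (2*n+1) i) = 2 * (if q i = true then 1 else 0) - 1 := by
    intro i
    rw [show Fin.ofNat (2*n+1) (i:ℕ) = i by simp]
    unfold val
    split_ifs <;> norm_num
  rw [Finset.sum_congr rfl fun i _ => this i, Finset.sum_sub_distrib, ← Finset.mul_sum]
  rw [Finset.card_filter] at h
  have h' : (∑ i : Fin (2*n+1), (if q i = true then (1:ℤ) else 0)) = n + 1 := by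
    exact_mod_cast h
  rw [h']
  simp
  ring

lemma E_period {n : ℕ} (q : Fin (2*n+1) → Bool)
    (h : (univ.filter (fun i => q i = true)).card = n+1) (t : ℕ) :
    E q (t + (2*n+1)) = E q t + 1 := by
  rw [add_comm t]
  have h1 := E_total q h
  unfold E at h1 ⊢
  rw [Finset.sum_range_add, h1, add_comm]
  congr 1
  refine Finset.sum_congr rfl fun i _ => ?_
  congr 1
  ext; simp [Fin.ofNat]

/-- periodic injective key -/
def K {n : ℕ} (q : Fin (2*n+1) → Bool) (t : ℕ) : ℤ := (2*n+1) * E q t - t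

lemma K_period {n : ℕ} (q : Fin (2*n+1) → Bool)
    (h : (univ.filter (fun i => q i = true)).card = n+1) :
    Function.Periodic (K q) (2*n+1) := by
  intro t
  unfold K
  rw [E_period q h]
  push_cast
  ring

lemma K_inj {n : ℕ} (q : Fin (2*n+1) → Bool) :
    Function.Injective (fun i : Fin (2*n+1) => K q i) := by
  intro a b hab
  simp only [K] at hab
  have h1 : ((2*n+1 : ℕ) : ℤ) ∣ (a:ℤ) - (b:ℤ) := ⟨E q a - E q b, by push_cast; linarith⟩
  have ha := a.2
  have hb := b.2
  have h2 : (a:ℤ) - (b:ℤ) = 0 := by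
    apply Int.eq_zero_of_abs_lt_dvd h1
    rw [abs_lt]; constructor <;> omega
  ext; omega

lemma J_rot {n : ℕ} (q : Fin (2*n+1) → Bool)
    (h : (univ.filter (fun i => q i = true)).card = n+1) (r : Fin (2*n+1)) :
    J (rot r q) = (univ.filter (fun i : Fin (2*n+1) => K q i ≤ K q r)).card := by
  unfold J
  have h1 : ((range (2*n+1)).filter (fun m => psum (val (rot r q)) m ≤ 0)).card =
      (univ.filter (fun i : Fin (2*n+1) => psum (val (rot r q)) i ≤ 0)).card := by
    rw [Finset.card_filter, Finset.card_filter, Finset.sum_range]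
  rw [h1, Finset.card_filter, Finset.card_filter]
  rw [← Equiv.sum_comp (Equiv.addLeft r) (fun i : Fin (2*n+1) => if K q i ≤ K q r then 1 else 0)]
  refine Finset.sum_congr rfl fun i _ => ?_
  have hi := i.2
  rw [psum_rot _ _ _ hi.le]
  have h2 : K q ((Equiv.addLeft r i : Fin (2*n+1)) : ℕ) = K q (r + i) := by
    rw [Equiv.coe_addLeft, Fin.val_add, (K_period q h).map_mod_nat]
  rw [h2]
  congr 1
  apply propext
  unfold K
  push_cast
  have hi' : (i:ℤ) < 2*n+1 := by exact_mod_cast hi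
  have hi0 : (0:ℤ) ≤ (i:ℤ) := by positivity
  constructor
  · intro h; nlinarith
  · intro h
    by_contra hc
    have : 1 ≤ E q (r + i) - E q r := by omega
    nlinarith

lemma rank_unique {N : ℕ} (f : Fin N → ℤ) (hf : Function.Injective f) (j : ℕ) (h1 : 1 ≤ j)
    (h2 : j ≤ N) :
    (univ.filter (fun r => (univ.filter (fun i => f i ≤ f r)).card = j)).card = 1 := by
  set ρ : Fin N → ℕ := fun r => (univ.filter (fun i => f i ≤ f r)).card with hρ
  have hmono : ∀ a b, f a < f b → ρ a < ρ b := by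
    intro a b hab
    apply Finset.card_lt_card
    rw [Finset.ssubset_iff_of_subset]
    · exact ⟨b, by simp, by simpa using hab⟩
    · intro i hi
      simp only [mem_filter, mem_univ, true_and] at hi ⊢
      omega
  have hinj : Function.Injective ρ := by
    intro a b hab
    apply hf
    rcases lt_trichotomy (f a) (f b) with h | h | h
    · have := hmono _ _ h; omega
    · exact h
    · have := hmono _ _ h; omega
  have himg : univ.image ρ = Finset.Icc 1 N := by
    apply Finset.eq_of_subset_of_card_le
    · intro x hx
      simp only [mem_image, mem_univ, true_and] at hx
      obtain ⟨r, rfl⟩ := hx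
      rw [Finset.mem_Icc]
      constructor
      · exact Finset.card_pos.2 ⟨r, by simp⟩
      · simpa using Finset.card_le_univ (univ.filter (fun i => f i ≤ f r))
    · rw [Finset.card_image_of_injective _ hinj]; simp
  have hj : j ∈ univ.image ρ := by rw [himg, Finset.mem_Icc]; exact ⟨h1, h2⟩
  simp only [mem_image, mem_univ, true_and] at hj
  obtain ⟨r, hr⟩ := hj
  rw [Finset.card_eq_one]
  refine ⟨r, ?_⟩
  ext x
  simp only [mem_filter, mem_univ, true_and, mem_singleton]
  constructor
  · intro hx; exact hinj (hx.trans hr.symm)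
  · rintro rfl; exact hr

/-- rotation as an equivalence -/
def rotE {m : ℕ} (r : Fin (m+1)) : (Fin (m+1) → Bool) ≃ (Fin (m+1) → Bool) :=
  (Equiv.addLeft r).symm.arrowCongr (Equiv.refl Bool)

lemma rotE_apply {m : ℕ} (r : Fin (m+1)) (q : Fin (m+1) → Bool) : rotE r q = rot r q := by
  ext i; simp [rotE, rot, Equiv.arrowCongr]

lemma rot_mem {m a k : ℕ} (r : Fin (m+1)) (q : Fin (m+1) → Bool) :
    rot r q ∈ T m a k ↔ q ∈ T m a k := by
  have h1 : (univ.filter (fun i => rot r q i = true)).card =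
      (univ.filter (fun i => q i = true)).card := by
    simp only [Finset.card_filter]
    exact Equiv.sum_comp (Equiv.addLeft r) (fun i => if q i = true then 1 else 0)
  have h2 : cpk (rot r q) = cpk q := by
    unfold cpk
    simp only [Finset.card_filter]
    rw [← Equiv.sum_comp (Equiv.addLeft r) (fun i => if q i = true ∧ q (i+1) = false then 1 else 0)]
    simp only [rot, Equiv.coe_addLeft, add_assoc]
    rfl
  simp [T, h1, h2]

lemma main_count (n k j : ℕ) (h1 : 1 ≤ j) (h2 : j ≤ 2*n+1) :
    ((T (2*n) (n+1) k).filter (fun q => J q = j)).card * (2*n+1) = (T (2*n) (n+1) k).card := by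
  have e1 : ∀ q ∈ T (2*n) (n+1) k,
      (univ.filter (fun r : Fin (2*n+1) => J (rot r q) = j)).card = 1 := by
    intro q hq
    simp only [T, mem_filter, mem_univ, true_and] at hq
    simp only [J_rot q hq.1]
    exact rank_unique _ (K_inj q) j h1 h2
  have e2 : ∀ r : Fin (2*n+1), ((T (2*n) (n+1) k).filter (fun q => J (rot r q) = j)).card =
      ((T (2*n) (n+1) k).filter (fun q => J q = j)).card := by
    intro r
    refine Finset.card_equiv (rotE r) fun q => ?_
    rw [rotE_apply, mem_filter, mem_filter, rot_mem]
  have e3 := Finset.sum_card_bipartiteAbove_eq_sum_card_bipartiteBelow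
    (s := T (2*n) (n+1) k) (t := (univ : Finset (Fin (2*n+1)))) (fun q r => J (rot r q) = j)
  simp only [Finset.bipartiteAbove, Finset.bipartiteBelow] at e3
  rw [Finset.sum_congr rfl e1, Finset.sum_congr rfl fun r _ => e2 r] at e3
  simp at e3
  rw [e3, mul_comm]

lemma val_one {N : ℕ} (q : Fin N → Bool) (i : Fin N) : val q i = 1 ↔ q i = true := by
  unfold val; split_ifs with h <;> simp [h]

lemma val_neg {N : ℕ} (q : Fin N → Bool) (i : Fin N) : val q i = -1 ↔ q i = false := by
  unfold val; split_ifs with h <;> simp [h]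

lemma val_inj {N : ℕ} : Function.Injective (val (N := N)) := by
  intro a b h
  funext i
  rw [Bool.eq_iff_iff, ← val_one, ← val_one, h]

end NCF

theorem narayana_chung_feller_circular_peaks (n k : ℕ) (hn : 1 ≤ n) (hk : 1 ≤ k)
    (j : ℕ) (hj1 : 1 ≤ j) (hj2 : j ≤ 2*n + 1) :
    Nat.card {p : Fin (2*n+1) → ℤ //
      (∀ i, p i = 1 ∨ p i = -1) ∧
      (univ.filter (fun i => p i = 1)).card = n + 1 ∧
      ((univ.filter (fun i : Fin (2*n) => p i.castSucc = 1 ∧ p i.succ = -1)).card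
        + (if p ⟨0, Nat.succ_pos _⟩ = -1 ∧ p (Fin.last (2*n)) = 1 then 1 else 0)) = k ∧
      (((Finset.range (2*n+1)).filter (fun m => psum p m ≤ 0)).card = j) }
      * (2*n + 1) =
      Nat.choose n (k-1) * Nat.choose n k + Nat.choose (n+1) k * Nat.choose (n-1) (k-1) := by
  rw [← NCF.card_T n k hn hk, ← NCF.main_count n k j hj1 hj2]
  congr 1
  rw [← Nat.card_eq_finsetCard]
  symm
  have key : ∀ q : Fin (2*n+1) → Bool,
      q ∈ (NCF.T (2*n) (n+1) k).filter (fun q => NCF.J q = j) ↔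
      ((∀ i, NCF.val q i = 1 ∨ NCF.val q i = -1) ∧
      (univ.filter (fun i => NCF.val q i = 1)).card = n + 1 ∧
      ((univ.filter (fun i : Fin (2*n) =>
          NCF.val q i.castSucc = 1 ∧ NCF.val q i.succ = -1)).card
        + (if NCF.val q ⟨0, Nat.succ_pos _⟩ = -1 ∧ NCF.val q (Fin.last (2*n)) = 1
            then 1 else 0)) = k ∧
      (((Finset.range (2*n+1)).filter (fun m => psum (NCF.val q) m ≤ 0)).card = j)) := by
    intro q
    have h0 : ∀ i, NCF.val q i = 1 ∨ NCF.val q i = -1 := by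
      intro i; rw [NCF.val_one, NCF.val_neg]; cases q i <;> simp
    simp only [NCF.T, mem_filter, mem_univ, true_and, NCF.cpk_eq, NCF.lpk, NCF.J]
    simp only [NCF.val_one, NCF.val_neg] at h0 ⊢
    rw [and_assoc]
    constructor
    · intro h; exact ⟨h0, h⟩
    · intro h; exact h.2
  refine Nat.card_eq_of_bijective (fun q => ⟨NCF.val q.1, (key q.1).1 q.2⟩) ⟨?_, ?_⟩
  · intro a b hab
    exact Subtype.ext (NCF.val_inj (congrArg Subtype.val hab))
  · rintro ⟨p, hp⟩
    have hv : NCF.val (fun i => decide (p i = 1)) = p := by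
      funext i
      rcases hp.1 i with h | h <;> simp [NCF.val, h]
    refine ⟨⟨fun i => decide (p i = 1), (key _).2 ?_⟩, Subtype.ext hv⟩
    rw [hv]
    exact hp
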